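/- Every minimal strongly connected digraph of order n ≥ 2 has at least two linear vertices, i.e., at least two vertices whose indegree and outdegree both equal 1. -/

import Mathlib

/-- Reachability in a digraph given by its arc set `A`. -/
def Reach {α : Type*} (A : Finset (α × α)) (u v : α) : Prop :=
  Relation.ReflTransGen (fun a b => (a, b) ∈ A) u v

/-- A digraph with vertex set `V` and arc set `A` is strongly connected if
every vertex reaches every other vertex by a directed path. -/
def StrongConn {α : Type*} (V : Finset α) (A : Finset (α × α)) : Prop :=
  ∀ u ∈ V, ∀ v ∈ V, Reach A u v

/-- Minimal strongly connected: strongly connected and removing any arc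
destroys strong connectivity. -/
def MSC {α : Type*} [DecidableEq α] (V : Finset α) (A : Finset (α × α)) : Prop :=
  StrongConn V A ∧ ∀ a ∈ A, ¬ StrongConn V (A.erase a)

/-- `l` is a directed (simple) path from `u` to `v` in the digraph with arc set `A`. -/
def IsPath {α : Type*} (A : Finset (α × α)) (u v : α) (l : List α) : Prop :=
  l.Chain' (fun a b => (a, b) ∈ A) ∧ l.head? = some u ∧ l.getLast? = some v ∧ l.Nodup

/-- `(u,v)` is a transitive arc: it is an arc and there is a directed path from
`u` to `v` distinct from the single arc `(u,v)`. -/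
def TransArc {α : Type*} (A : Finset (α × α)) (u v : α) : Prop :=
  (u, v) ∈ A ∧ ∃ l, IsPath A u v l ∧ l ≠ [u, v]

/-- `l` (a list of distinct vertices, of length ≥ 2) is a directed cycle:
consecutive vertices are joined by arcs, and there is an arc from the last
vertex back to the first. -/
def IsCycle {α : Type*} (A : Finset (α × α)) (l : List α) : Prop :=
  ∃ h : l ≠ [], l.Nodup ∧ 2 ≤ l.length ∧
    List.Chain (fun a b => (a, b) ∈ A) (l.getLast h) l

/-- Well-formedness: nonempty vertex set, arcs join vertices of `V`, no loops. -/
def GoodDigraph {α : Type*} (V : Finset α) (A : Finset (α × α)) : Prop :=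
  V.Nonempty ∧ ∀ a ∈ A, a.1 ∈ V ∧ a.2 ∈ V ∧ a.1 ≠ a.2

/-- Outdegree of a vertex. -/
def outdeg {α : Type*} [DecidableEq α] (A : Finset (α × α)) (v : α) : ℕ :=
  (A.filter (fun a => a.1 = v)).card

/-- Indegree of a vertex. -/
def indeg {α : Type*} [DecidableEq α] (A : Finset (α × α)) (v : α) : ℕ :=
  (A.filter (fun a => a.2 = v)).card

/-- A linear vertex has indegree and outdegree equal to 1. -/
def LinearVertex {α : Type*} [DecidableEq α] (A : Finset (α × α)) (v : α) : Prop :=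
  indeg A v = 1 ∧ outdeg A v = 1

/-- The digraph is a directed `n`-cycle: its vertices can be listed
`v₁, …, vₙ` so that the arcs are exactly `(v₁,v₂), …, (vₙ,v₁)`. -/
def IsCycleDigraph {α : Type*} [DecidableEq α] (V : Finset α) (A : Finset (α × α)) : Prop :=
  ∃ l : List α, l.Nodup ∧ 2 ≤ l.length ∧ l.toFinset = V ∧ A = (l.zip (l.rotate 1)).toFinset

/-- A directed tree: every arc is accompanied by its reverse, and the
underlying undirected graph (on the vertex set `V`) is a tree. -/
def IsDirTree {α : Type*} [DecidableEq α] (V : Finset α) (A : Finset (α × α)) : Prop :=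
  (∀ u v : α, (u, v) ∈ A → (v, u) ∈ A) ∧
  (SimpleGraph.fromRel (fun a b : {x // x ∈ V} => ((a : α), (b : α)) ∈ A)).IsTree

/-- `(V', A')` is the (internal or external) expansion of `(V, A)` by the new
vertex `v`.  Internal: an arc `(u,w)` is replaced by `(u,v)` and `(v,w)`.
External: the arcs `(u,v)` and `(v,w)` are added for vertices `u, w ∈ V`. -/
def IsExpansionBy {α : Type*} [DecidableEq α] (v : α) (V : Finset α) (A : Finset (α × α))
    (V' : Finset α) (A' : Finset (α × α)) : Prop :=
  v ∉ V ∧ V' = insert v V ∧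
    ((∃ u w, (u, w) ∈ A ∧ A' = insert (u, v) (insert (v, w) (A.erase (u, w)))) ∨
     (∃ u ∈ V, ∃ w ∈ V, A' = insert (u, v) (insert (v, w) A)))

/-!
Fix a vertex `v` and choose an arc `a` for which the strong component of `v` in `A - a` is
inclusion-maximal; by minimality it misses some vertex `b` of `V`. Let `(b, c)` start a path from
`b` to `v` that never returns to `b`. If there were another arc `(b, d)`, then in `A - (b, d)` the
vertex `b` would still be strongly connected to `v`, and so would be every vertex of the component
chosen above, since the paths inside that component avoid `b`. This contradicts the choice of `a`,
so `b` has outdegree 1, and, reversing all arcs, indegree 1. Hence every `v` has a linear vertex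
different from it, and applying this twice gives two of them.
-/

section

variable {α : Type*} {A B : Finset (α × α)} {a : α × α} {u v w b d : α}

lemma Reach.mono (hAB : A ⊆ B) (h : Reach A u v) : Reach B u v :=
  Relation.ReflTransGen.mono (fun _ _ harc => hAB harc) _ _ h

lemma Reach.exists_arc (h : Reach A u v) (hne : u ≠ v) : ∃ w, (u, w) ∈ A :=
  (Relation.ReflTransGen.cases_head h).elim (absurd · hne) fun ⟨w, huw, _⟩ => ⟨w, huw⟩

/-- The strong component of `v` in the digraph with arc set `A`, as the set of all vertices that
reach `v` and are reached from it. -/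
def strongComponent (A : Finset (α × α)) (v : α) : Set α :=
  {x | Reach A v x ∧ Reach A x v}

lemma self_mem_strongComponent : v ∈ strongComponent A v :=
  ⟨.refl, .refl⟩

lemma strongComponent_mono (hAB : A ⊆ B) : strongComponent A v ⊆ strongComponent B v :=
  fun _ hx => ⟨hx.1.mono hAB, hx.2.mono hAB⟩

lemma strongConn_of_subset_strongComponent {V : Finset α} (hV : ↑V ⊆ strongComponent A v) :
    StrongConn V A :=
  fun _ hx _ hy => (hV hx).2.trans (hV hy).1

/-- The digraph with all arcs reversed, used to transfer statements about outdegrees to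
indegrees. -/
def revArcs (A : Finset (α × α)) : Finset (α × α) :=
  A.map (Equiv.prodComm α α).toEmbedding

lemma mem_revArcs : a ∈ revArcs A ↔ a.swap ∈ A :=
  Finset.mem_map_equiv

lemma reach_revArcs : Reach (revArcs A) u v ↔ Reach A v u := by
  simp only [Reach, mem_revArcs, Prod.swap_prod_mk]
  exact Relation.reflTransGen_swap

lemma strongComponent_revArcs : strongComponent (revArcs A) v = strongComponent A v :=
  Set.ext fun _ => (and_congr reach_revArcs reach_revArcs).trans and_comm

variable [DecidableEq α]

lemma revArcs_erase : revArcs (A.erase a) = (revArcs A).erase a.swap :=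
  Finset.map_erase _ _ _

lemma outdeg_revArcs : outdeg (revArcs A) v = indeg A v := by
  rw [outdeg, revArcs, Finset.filter_map, Finset.card_map]
  rfl

/-- The digraph obtained by deleting all arcs that leave `b`: its paths are those paths that visit
`b` at most at their end. -/
def eraseOut (A : Finset (α × α)) (b : α) : Finset (α × α) :=
  A.filter (fun a => a.1 ≠ b)

lemma mem_eraseOut : a ∈ eraseOut A b ↔ a ∈ A ∧ a.1 ≠ b :=
  Finset.mem_filter

lemma eraseOut_mono (hAB : A ⊆ B) : eraseOut A b ⊆ eraseOut B b :=
  Finset.filter_subset_filter _ hAB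

lemma eraseOut_subset_erase : eraseOut A b ⊆ A.erase (b, d) := by
  intro a ha
  obtain ⟨haA, hab⟩ := mem_eraseOut.1 ha
  exact Finset.mem_erase.2 ⟨fun h => hab (congrArg Prod.fst h), haA⟩

lemma not_reach_eraseOut_self (hne : b ≠ w) : ¬ Reach (eraseOut A b) b w := fun h =>
  let ⟨_, hbc⟩ := h.exists_arc hne
  (mem_eraseOut.1 hbc).2 rfl

lemma Reach.eraseOut_target (h : Reach A u b) : Reach (eraseOut A b) u b := by
  induction h using Relation.ReflTransGen.head_induction_on with
  | refl => exact .refl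
  | @head x y hxy _ ih =>
    obtain rfl | hxb := eq_or_ne x b
    · exact .refl
    · exact .head (mem_eraseOut.2 ⟨hxy, hxb⟩) ih

-- In the second case `(b, c)` is the arc by which the path leaves `b` for the last time.
lemma Reach.eraseOut_or_exists_arc (b : α) (h : Reach A u w) :
    Reach (eraseOut A b) u w ∨
      Reach A u b ∧ ∃ c, (b, c) ∈ A ∧ Reach (eraseOut A b) c w := by
  induction h using Relation.ReflTransGen.head_induction_on with
  | refl => exact .inl .refl
  | @head x y hxy _ ih =>
    obtain hyw | ⟨hyb, hexit⟩ := ih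
    · obtain rfl | hxb := eq_or_ne x b
      · exact .inr ⟨.refl, y, hxy, hyw⟩
      · exact .inl (.head (mem_eraseOut.2 ⟨hxy, hxb⟩) hyw)
    · exact .inr ⟨.head hxy hyb, hexit⟩

lemma Reach.exists_arc_reach_eraseOut (h : Reach A b w) (hne : b ≠ w) :
    ∃ c, (b, c) ∈ A ∧ Reach (eraseOut A b) c w :=
  ((h.eraseOut_or_exists_arc b).resolve_left (not_reach_eraseOut_self hne)).2

lemma Reach.eraseOut_of_not_through (h : Reach A u w) (hb : ¬ (Reach A u b ∧ Reach A b w)) :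
    Reach (eraseOut A b) u w := by
  refine (h.eraseOut_or_exists_arc b).resolve_right fun ⟨hub, c, hbc, hcw⟩ => hb ⟨hub, ?_⟩
  exact .head hbc (hcw.mono (Finset.filter_subset _ _))

lemma strongComponent_subset_eraseOut (hb : b ∉ strongComponent A v) :
    strongComponent A v ⊆ strongComponent (eraseOut A b) v := fun _ ⟨hvx, hxv⟩ =>
  ⟨hvx.eraseOut_of_not_through fun ⟨hvb, hbx⟩ => hb ⟨hvb, hbx.trans hxv⟩,
    hxv.eraseOut_of_not_through fun ⟨hxb, hbv⟩ => hb ⟨hvx.trans hxb, hbv⟩⟩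

/-- The arc `a` is a maximizing arc for `v` if, among all arcs of `A`, its deletion leaves an
inclusion-maximal strong component of `v`. -/
def IsMaximizingArc (A : Finset (α × α)) (v : α) (a : α × α) : Prop :=
  MaximalFor (· ∈ A) (fun e => strongComponent (A.erase e) v) a

lemma IsMaximizingArc.swap (ha : IsMaximizingArc A v a) :
    IsMaximizingArc (revArcs A) v a.swap := by
  have component_erase_swap (e : α × α) :
      strongComponent ((revArcs A).erase e.swap) v = strongComponent (A.erase e) v := by
    rw [← revArcs_erase, strongComponent_revArcs]
  refine ⟨mem_revArcs.2 ha.1, fun e he hle => ?_⟩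
  have hmax := ha.2 (mem_revArcs.1 he)
  simp only [← component_erase_swap, Prod.swap_swap] at hmax
  exact hmax hle

lemma IsMaximizingArc.outdeg_eq_one (ha : IsMaximizingArc A v a) (hbA : b ∈ strongComponent A v)
    (hba : b ∉ strongComponent (A.erase a) v) : outdeg A b = 1 := by
  have hbv : b ≠ v := by
    rintro rfl
    exact hba self_mem_strongComponent
  obtain ⟨c, hbc, hcv⟩ := hbA.2.exists_arc_reach_eraseOut hbv
  have arc_unique (d : α) (hbd : (b, d) ∈ A) : d = c := by
    by_contra hdc
    have hb_mem : b ∈ strongComponent (A.erase (b, d)) v :=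
      ⟨hbA.1.eraseOut_target.mono eraseOut_subset_erase,
        .head (by simp [hbc, Ne.symm hdc]) (hcv.mono eraseOut_subset_erase)⟩
    have hsub : strongComponent (A.erase a) v ⊆ strongComponent (A.erase (b, d)) v :=
      (strongComponent_subset_eraseOut hba).trans <| strongComponent_mono <|
        (eraseOut_mono (A.erase_subset a)).trans eraseOut_subset_erase
    exact hba (ha.2 hbd hsub hb_mem)
  refine Finset.card_eq_one.2 ⟨(b, c), Finset.eq_singleton_iff_unique_mem.2 ⟨?_, ?_⟩⟩
  · exact Finset.mem_filter.2 ⟨hbc, rfl⟩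
  · rintro ⟨x, d⟩ hxd
    obtain ⟨hxdA, rfl⟩ := Finset.mem_filter.1 hxd
    rw [arc_unique d hxdA]

lemma IsMaximizingArc.linearVertex (ha : IsMaximizingArc A v a) (hbA : b ∈ strongComponent A v)
    (hba : b ∉ strongComponent (A.erase a) v) : LinearVertex A b := by
  refine ⟨?_, ha.outdeg_eq_one hbA hba⟩
  rw [← outdeg_revArcs]
  apply ha.swap.outdeg_eq_one
  · rwa [strongComponent_revArcs]
  · rwa [← revArcs_erase, strongComponent_revArcs]

lemma MSC.exists_linearVertex_ne {V : Finset α} (h : MSC V A) (hV : V.Nontrivial) (hv : v ∈ V) :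
    ∃ w ∈ V, w ≠ v ∧ LinearVertex A w := by
  obtain ⟨u, hu, huv⟩ := hV.exists_ne v
  obtain ⟨x, hux⟩ := (h.1 u hu v hv).exists_arc huv
  obtain ⟨a, ha⟩ : ∃ a, IsMaximizingArc A v a := Finset.exists_maximalFor _ A ⟨_, hux⟩
  obtain ⟨w, hw, hwa⟩ := Set.not_subset.1 <|
    mt strongConn_of_subset_strongComponent (h.2 a ha.1)
  refine ⟨w, hw, ?_, ha.linearVertex ⟨h.1 v hv w hw, h.1 w hw v hv⟩ hwa⟩
  rintro rfl
  exact hwa self_mem_strongComponent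

end

/-- Here `V` is a set of terminals: arcs, and the paths joining vertices of `V`, may run through
vertices outside `V`. -/
theorem stmt_7_general {α : Type*} [DecidableEq α] (V : Finset α) (A : Finset (α × α))
    (hn : 2 ≤ V.card) (h : MSC V A) :
    ∃ v ∈ V, ∃ w ∈ V, v ≠ w ∧ LinearVertex A v ∧ LinearVertex A w := by
  have hV : V.Nontrivial := Finset.one_lt_card_iff_nontrivial.1 hn
  obtain ⟨u, hu⟩ := hV.nonempty
  obtain ⟨v, hv, -, hv_linear⟩ := h.exists_linearVertex_ne hV hu
  obtain ⟨w, hw, hwv, hw_linear⟩ := h.exists_linearVertex_ne hV hv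
  exact ⟨v, hv, w, hw, hwv.symm, hv_linear, hw_linear⟩

/-- every MSC digraph of order `n ≥ 2` has at least two linear
vertices. -/
theorem stmt_7 {α : Type*} [DecidableEq α] (V : Finset α) (A : Finset (α × α))
    (hg : GoodDigraph V A) (hn : 2 ≤ V.card) (h : MSC V A) :
    ∃ v ∈ V, ∃ w ∈ V, v ≠ w ∧ LinearVertex A v ∧ LinearVertex A w :=
  stmt_7_general V A hn h
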